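/- Let K be a field of characteristic 0, n ≥ 1, and let D be a locally nilpotent K-derivation of the polynomial ring K[x₁, …, xₙ] that admits a slice s (i.e., D(s) = 1). Extend D to a K-derivation D′ of K[x₁, …, x_{n+1}] by setting D′(x_{n+1}) = 0 and D′(xᵢ) = D(xᵢ) for i ≤ n. Then the kernel of D′ is isomorphic as a K-algebra to K[x₁, …, xₙ]. -/

import Mathlib

open MvPolynomial

/-- The kernel of a `K`-derivation of a commutative `K`-algebra `A` with values
in `A`, as a `K`-subalgebra of `A`. -/
def Derivation.kerSubalgebra {K A : Type*} [CommRing K] [CommRing A] [Algebra K A]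
    (D : Derivation K A A) : Subalgebra K A where
  carrier := {a | D a = 0}
  mul_mem' := by
    intro a b (ha : D a = 0) (hb : D b = 0)
    show D (a * b) = 0
    rw [D.leibniz, ha, hb, smul_zero, smul_zero, add_zero]
  add_mem' := by
    intro a b (ha : D a = 0) (hb : D b = 0)
    show D (a + b) = 0
    rw [map_add, ha, hb, add_zero]
  algebraMap_mem' := fun r => D.map_algebraMap r

/-!
Write the larger ring as `A[X]` with `A = K[x₁, …, xₙ]`. Since `D′` kills `X`, the element
`t = s - X` is again a slice, and `D′` is again locally nilpotent. For a locally nilpotent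
derivation `E` of a `ℚ`-algebra `B` with slice `t`, every residue class modulo `t` contains exactly
one element of `ker E`: existence is Dixmier's formula `b ↦ ∑ᵢ (-t)ⁱ / i! · Eⁱ b`, and uniqueness
holds because `E (t * c) = 0` gives `t * Eᵏ⁺¹ c = -(k + 1) Eᵏ c` for all `k`, so that local
nilpotency forces `c = 0` by descending induction. Hence `ker D′ ≃ A[X] ⧸ (s - X) ≃ A`.
-/

/-- Local nilpotency of a derivation, phrased with iterates of the underlying function; the zeroth
iterate is allowed, as it only kills `0`. -/
def IsLocallyNilpotentDerivation {R B : Type*} [CommRing R] [CommRing B] [Algebra R B]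
    (E : Derivation R B B) : Prop :=
  ∀ b, ∃ k, E^[k] b = 0

open Finset Nat in
/-- The partial sums of Dixmier's operator `exp (-t E)`. When `t` is a slice and `Eᵏ b = 0` with `k`
positive, the sum of the first `k` terms is the element of `ker E` congruent to `b` modulo `t`. -/
def dixmierSum {R B : Type*} [CommRing R] [CommRing B] [Algebra R B] [Algebra ℚ B]
    (E : Derivation R B B) (t : B) (k : ℕ) (b : B) : B :=
  ∑ i ∈ range k, ((-1) ^ i / i ! : ℚ) • (t ^ i * E^[i] b)

section Slice

variable {R B : Type*} [CommRing R] [CommRing B] [Algebra R B] {E : Derivation R B B} {t : B}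

theorem derivation_slice_pow_succ (ht : E t = 1) (k : ℕ) :
    E (t ^ (k + 1)) = ((k + 1 : ℕ) : B) * t ^ k := by
  simp [E.leibniz_pow, ht]

theorem derivation_iterate_succ_slice_mul (ht : E t = 1) (c : B) (k : ℕ) :
    E^[k + 1] (t * c) = t * E^[k + 1] c + ((k + 1 : ℕ) : B) * E^[k] c := by
  induction k with
  | zero => simp [ht]
  | succ k ih =>
    rw [Function.iterate_succ_apply', ih]
    simp only [map_add, E.leibniz, E.map_natCast, ht, smul_eq_mul,
      ← Function.iterate_succ_apply' E]
    push_cast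
    ring

theorem eq_zero_of_derivation_slice_mul_eq_zero [IsAddTorsionFree B] (ht : E t = 1) {c : B}
    (htc : E (t * c) = 0) {k : ℕ} (hk : E^[k] c = 0) : c = 0 := by
  induction k with
  | zero => exact hk
  | succ k ih =>
    have h : (k + 1) • E^[k] c = 0 := by
      have hiter := derivation_iterate_succ_slice_mul ht c k
      rw [Function.iterate_succ_apply, htc, iterate_map_zero, hk, mul_zero, zero_add] at hiter
      rw [nsmul_eq_mul, ← hiter]
    exact ih ((nsmul_eq_zero_iff_right k.succ_ne_zero).mp h)

variable [Algebra ℚ B]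

open Nat in
theorem derivation_dixmierSum_succ (ht : E t = 1) (k : ℕ) (b : B) :
    E (dixmierSum E t (k + 1) b) = ((-1) ^ k / k ! : ℚ) • (t ^ k * E^[k + 1] b) := by
  induction k with
  | zero => simp [dixmierSum]
  | succ k ih =>
    have hcoeff : ((-1) ^ (k + 1) / (k + 1)! : ℚ) * (k + 1 : ℕ) = -((-1) ^ k / k !) := by
      rw [Nat.factorial_succ]
      push_cast
      field_simp
      ring
    have hterm : E (t ^ (k + 1) * E^[k + 1] b) =
        t ^ (k + 1) * E^[k + 2] b + ((k + 1 : ℕ) : ℚ) • (t ^ k * E^[k + 1] b) := by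
      rw [E.leibniz, derivation_slice_pow_succ ht, ← Function.iterate_succ_apply' E,
        Nat.cast_smul_eq_nsmul, nsmul_eq_mul, smul_eq_mul, smul_eq_mul]
      ring
    rw [dixmierSum, Finset.sum_range_succ, map_add, ← dixmierSum, ih, map_rat_smul, hterm,
      smul_add, smul_smul, hcoeff, neg_smul]
    abel

theorem dvd_sub_dixmierSum_succ (E : Derivation R B B) (t : B) (k : ℕ) (b : B) :
    t ∣ b - dixmierSum E t (k + 1) b := by
  have hsplit : b - dixmierSum E t (k + 1) b =
      -∑ i ∈ Finset.range k,
        ((-1) ^ (i + 1) / (i + 1).factorial : ℚ) • (t ^ (i + 1) * E^[i + 1] b) := by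
    rw [dixmierSum, Finset.sum_range_succ']
    simp
  rw [hsplit, dvd_neg]
  refine Finset.dvd_sum fun i _ => dvd_smul_of_dvd _ ?_
  exact (dvd_pow_self t i.succ_ne_zero).mul_right _

theorem exists_mem_kerSubalgebra_slice_dvd_sub (hE : IsLocallyNilpotentDerivation E)
    (ht : E t = 1) (b : B) : ∃ b₀ ∈ E.kerSubalgebra, t ∣ b - b₀ := by
  obtain ⟨k, hk⟩ := hE b
  refine ⟨dixmierSum E t (k + 1) b, ?_, dvd_sub_dixmierSum_succ E t k b⟩
  change E _ = 0
  rw [derivation_dixmierSum_succ ht, Function.iterate_succ_apply', hk, map_zero, mul_zero,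
    smul_zero]

theorem bijective_comp_kerSubalgebra_val {A : Type*} [CommRing A] [Algebra R A]
    (hE : IsLocallyNilpotentDerivation E) (ht : E t = 1) {π : B →ₐ[R] A}
    (hπ : Function.Surjective π) (hker : RingHom.ker π = Ideal.span {t}) :
    Function.Bijective (π.comp E.kerSubalgebra.val) := by
  have hdvd (b : B) : π b = 0 ↔ t ∣ b := by
    rw [← RingHom.mem_ker, hker, Ideal.mem_span_singleton]
  refine ⟨(injective_iff_map_eq_zero _).mpr ?_, fun a => ?_⟩
  · rintro ⟨b, hb⟩ hπb
    have : IsAddTorsionFree B := .of_module_rat B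
    obtain ⟨c, rfl⟩ := (hdvd b).mp hπb
    obtain ⟨k, hk⟩ := hE c
    have hc : c = 0 := eq_zero_of_derivation_slice_mul_eq_zero ht hb hk
    exact Subtype.ext (hc ▸ mul_zero t)
  · obtain ⟨b, rfl⟩ := hπ a
    obtain ⟨b₀, hb₀, hsub⟩ := exists_mem_kerSubalgebra_slice_dvd_sub hE ht b
    rw [← hdvd, map_sub, sub_eq_zero] at hsub
    exact ⟨⟨b₀, hb₀⟩, hsub.symm⟩

end Slice

section PolynomialExtension

variable {R A B : Type*} [CommRing R] [CommRing A] [CommRing B] [Algebra R A] [Algebra R B]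
  {D : Derivation R A A} {D' : Derivation R B B}

theorem IsLocallyNilpotentDerivation.polynomial_extension {e : Polynomial A ≃ₐ[R] B}
    (hD : IsLocallyNilpotentDerivation D) (hC : ∀ a, D' (e (.C a)) = e (.C (D a)))
    (hX : D' (e .X) = 0) : IsLocallyNilpotentDerivation D' := by
  have hmonomial (i : ℕ) : Function.Semiconj (fun a => e (.monomial i a)) D D' := fun a => by
    simp only [← Polynomial.C_mul_X_pow_eq_monomial, map_mul, map_pow, D'.leibniz, D'.leibniz_pow,
      hC, hX, smul_eq_mul, smul_zero, mul_zero, zero_add]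
    exact mul_comm _ _
  intro b
  obtain ⟨p, rfl⟩ := e.surjective b
  induction p using Polynomial.induction_on' with
  | add p q hp hq =>
    obtain ⟨k, hk⟩ := hp
    obtain ⟨l, hl⟩ := hq
    refine ⟨k + l, ?_⟩
    rw [map_add, iterate_map_add, Function.iterate_add_apply D' k l (e q), hl, add_comm k l,
      Function.iterate_add_apply, hk, iterate_map_zero, iterate_map_zero, add_zero]
  | monomial i a =>
    obtain ⟨k, hk⟩ := hD a
    refine ⟨k, ?_⟩
    rw [← ((hmonomial i).iterate_right k).eq, hk, map_zero, map_zero]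

theorem ker_aeval_comp_symm (e : Polynomial A ≃ₐ[R] B) (s : A) :
    RingHom.ker (((Polynomial.aeval s).restrictScalars R).comp (e.symm : B →ₐ[R] Polynomial A)) =
      Ideal.span {e (.C s - .X)} := by
  ext b
  have hroot : e.symm b ∈ RingHom.ker (Polynomial.evalRingHom s) ↔ .C s - .X ∣ e.symm b := by
    rw [Polynomial.ker_evalRingHom, Ideal.mem_span_singleton, ← neg_dvd, neg_sub]
  rw [Ideal.mem_span_singleton, ← e.apply_symm_apply b, map_dvd_iff, ← hroot]
  simp [RingHom.mem_ker]

theorem kernel_of_extended_derivation_iso_general [Algebra ℚ A]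
    (e : Polynomial A ≃ₐ[R] B) (hD : IsLocallyNilpotentDerivation D) {s : A} (hs : D s = 1)
    (hC : ∀ a, D' (e (.C a)) = e (.C (D a))) (hX : D' (e .X) = 0) :
    Nonempty (D'.kerSubalgebra ≃ₐ[R] A) := by
  let _ : Algebra ℚ B := ((e : Polynomial A →+* B).comp (algebraMap ℚ (Polynomial A))).toAlgebra
  have hslice : D' (e (.C s - .X)) = 1 := by simp [hC, hX, hs]
  exact ⟨.ofBijective _ (bijective_comp_kerSubalgebra_val (hD.polynomial_extension hC hX) hslice
    (fun a => ⟨e (.C a), by simp⟩) (ker_aeval_comp_symm e s))⟩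

end PolynomialExtension

section LastVariable

variable (R : Type*) [CommSemiring R] (n : ℕ)

/-- The identification of `R[x₁, …, xₙ][X]` with `R[x₁, …, xₙ₊₁]` that sends `X` to the last
variable; `MvPolynomial.finSuccEquiv` splits off the first one instead. -/
noncomputable def lastVariableEquiv :
    Polynomial (MvPolynomial (Fin n) R) ≃ₐ[R] MvPolynomial (Fin (n + 1)) R :=
  (optionEquivLeft R (Fin n)).symm.trans (renameEquiv R finSuccEquivLast.symm)

theorem lastVariableEquiv_X : lastVariableEquiv R n .X = X (Fin.last n) := by
  simp [lastVariableEquiv]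

variable {R n}

theorem lastVariableEquiv_C (p : MvPolynomial (Fin n) R) :
    lastVariableEquiv R n (.C p) = rename Fin.castSucc p := by
  induction p using MvPolynomial.induction_on with
  | C r => simp [lastVariableEquiv]
  | add p q hp hq => simp only [map_add, hp, hq]
  | mul_X p i hp =>
    simp only [map_mul, hp, rename_X]
    simp [lastVariableEquiv]

end LastVariable

theorem derivation_apply_algHom_of_X {σ R B : Type*} [CommSemiring R] [CommSemiring B] [Algebra R B]
    {D : Derivation R (MvPolynomial σ R) (MvPolynomial σ R)} {D' : Derivation R B B}
    {φ : MvPolynomial σ R →ₐ[R] B} (hX : ∀ i, D' (φ (X i)) = φ (D (X i)))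
    (p : MvPolynomial σ R) : D' (φ p) = φ (D p) := by
  induction p using MvPolynomial.induction_on with
  | C r => rw [← algebraMap_eq, φ.commutes, D'.map_algebraMap, D.map_algebraMap, map_zero]
  | add p q hp hq => simp only [map_add, hp, hq]
  | mul_X p i hp => simp only [map_mul, map_add, Derivation.leibniz, smul_eq_mul, hp, hX]

/-- **Key step in the proof of Theorem 1.2.**  Let `D` be a locally nilpotent
`K`-derivation of `K[x₁, …, xₙ]` with a slice `s`, and extend it to a derivation
`D′` of `K[x₁, …, x_{n+1}]` with `D′(x_{n+1}) = 0`.  Then the kernel of `D′` is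
isomorphic as a `K`-algebra to `K[x₁, …, xₙ]`. -/
theorem kernel_of_extended_derivation_iso
    (K : Type) [Field K] [CharZero K] (n : ℕ) (hn : 1 ≤ n)
    (D : Derivation K (MvPolynomial (Fin n) K) (MvPolynomial (Fin n) K))
    (hloc : ∀ g : MvPolynomial (Fin n) K,
      ∃ k : ℕ, 0 < k ∧ (D.toLinearMap ^ k) g = 0)
    (s : MvPolynomial (Fin n) K) (hs : D s = 1)
    (D' : Derivation K (MvPolynomial (Fin (n + 1)) K) (MvPolynomial (Fin (n + 1)) K))
    (hD'ext : ∀ i : Fin n, D' (X i.castSucc) = rename Fin.castSucc (D (X i)))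
    (hD'last : D' (X (Fin.last n)) = 0) :
    Nonempty (D'.kerSubalgebra ≃ₐ[K] MvPolynomial (Fin n) K) := by
  have hD : IsLocallyNilpotentDerivation D := fun g =>
    (hloc g).imp fun k hk => Module.End.pow_apply D.toLinearMap k g ▸ hk.2
  have hrename (p) : D' (rename Fin.castSucc p) = rename Fin.castSucc (D p) :=
    derivation_apply_algHom_of_X (fun i => by rw [rename_X, hD'ext]) p
  exact kernel_of_extended_derivation_iso_general (lastVariableEquiv K n) hD hs
    (by simpa only [lastVariableEquiv_C] using hrename) (by rw [lastVariableEquiv_X, hD'last])
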